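/- arXiv:1005.4943 — 2 statements merged into one kernel-verified Lean document; each statement's English description precedes it below -/
import Mathlib

section
/- Let V : ℝ → ℝ be measurable with ∫_ℝ (1 + |t|) |V(t)| dt < ∞. Define η(u) = ∫_u^∞ |V(t)| dt, γ_1(x) = ∫_x^∞ (t - x) |V(t)| dt, and recursively K_0(x,y) = ∫_{x+y}^∞ V(t) dt and K_{n+1}(x,y) = ∫_0^y ∫_{x+y-z}^∞ V(t) K_n(t,z) dt dz. Then for every n ≥ 0 and all x ≥ 0, y ≥ 0, |K_n(x,y)| ≤ η(x + y) · γ_1(x)^n / n!. -/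
open MeasureTheory Set

/-- `η(u) = ∫_u^∞ |V(t)| dt`. -/
noncomputable def etaV (V : ℝ → ℝ) (u : ℝ) : ℝ := ∫ t in Ioi u, |V t|

/-- `γ₁(x) = ∫_x^∞ (t - x)|V(t)| dt`. -/
noncomputable def gammaOne (V : ℝ → ℝ) (x : ℝ) : ℝ := ∫ t in Ioi x, (t - x) * |V t|

/-- The Deift–Trubowitz iterates: `K₀(x,y) = ∫_{x+y}^∞ V(t) dt` and
`K_{n+1}(x,y) = ∫_0^y ∫_{x+y-z}^∞ V(t) Kₙ(t,z) dt dz`. -/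
noncomputable def DTiter (V : ℝ → ℝ) : ℕ → ℝ → ℝ → ℝ
  | 0, x, y => ∫ t in Ioi (x + y), V t
  | n + 1, x, y => ∫ z in Ioc (0 : ℝ) y, ∫ t in Ioi (x + y - z), V t * DTiter V n t z

lemma DTaux_int (V : ℝ → ℝ) (hV : Measurable V)
    (hV1 : Integrable (fun t => (1 + |t|) * |V t|)) : Integrable (fun t => |V t|) := by
  refine hV1.mono' hV.abs.aestronglyMeasurable (Filter.Eventually.of_forall fun t => ?_)
  rw [Real.norm_eq_abs, abs_abs]
  nlinarith [abs_nonneg t, abs_nonneg (V t), mul_nonneg (abs_nonneg t) (abs_nonneg (V t))]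

lemma DTaux_gamma_eq (V : ℝ → ℝ) (x : ℝ) :
    gammaOne V x = ∫ t, max (t - x) 0 * |V t| := by
  unfold gammaOne
  rw [← integral_indicator measurableSet_Ioi]
  congr 1
  ext t
  by_cases h : x < t
  · rw [indicator_of_mem (show t ∈ Ioi x from h), max_eq_left (by linarith)]
  · rw [indicator_of_notMem (show t ∉ Ioi x from h), max_eq_right (by linarith), zero_mul]

lemma DTaux_gint (V : ℝ → ℝ) (hV : Measurable V)
    (hV1 : Integrable (fun t => (1 + |t|) * |V t|)) (x : ℝ) :
    Integrable (fun t => max (t - x) 0 * |V t|) := by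
  refine (hV1.const_mul (1 + |x|)).mono' ?_ (Filter.Eventually.of_forall fun t => ?_)
  · exact Measurable.aestronglyMeasurable (by fun_prop)
  · rw [Real.norm_eq_abs, abs_mul, abs_abs, ← mul_assoc]
    refine mul_le_mul_of_nonneg_right ?_ (abs_nonneg _)
    rw [abs_of_nonneg (le_max_right _ _)]
    have h1 := le_abs_self t
    have h2 := neg_abs_le x
    have := mul_nonneg (abs_nonneg x) (abs_nonneg t)
    apply max_le <;> nlinarith [abs_nonneg x, abs_nonneg t]

lemma DTaux_deriv (V : ℝ → ℝ) (hV : Measurable V)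
    (hV1 : Integrable (fun t => (1 + |t|) * |V t|)) (x : ℝ) :
    HasDerivAt (gammaOne V) (-etaV V x) x := by
  have key := hasDerivAt_integral_of_dominated_loc_of_lip (μ := (volume : Measure ℝ))
    (F := fun (x t : ℝ) => max (t - x) 0 * |V t|)
    (F' := fun t => (Ioi x).indicator (fun t => -|V t|) t) (x₀ := x) (bound := fun t => |V t|)
    (s := univ) Filter.univ_mem
    (Filter.Eventually.of_forall fun y => (DTaux_gint V hV hV1 y).aestronglyMeasurable)
    (DTaux_gint V hV hV1 x)
    ((hV.abs.neg.indicator measurableSet_Ioi).aestronglyMeasurable)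
    (Filter.Eventually.of_forall fun t => ?_) (DTaux_int V hV hV1) ?_
  · have h := key.2
    rw [integral_indicator measurableSet_Ioi, integral_neg] at h
    have e : gammaOne V = fun x => ∫ t, max (t - x) 0 * |V t| := funext (DTaux_gamma_eq V)
    rw [e]
    exact h
  · refine LipschitzOnWith.of_dist_le_mul fun a _ b _ => ?_
    rw [Real.dist_eq, Real.dist_eq, ← sub_mul, abs_mul, abs_abs, mul_comm]
    rw [Real.coe_nnabs, abs_abs]
    refine mul_le_mul_of_nonneg_left ?_ (abs_nonneg _)
    refine (abs_max_sub_max_le_abs _ _ _).trans ?_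
    rw [show t - a - (t - b) = -(a - b) by ring, abs_neg]
  · have : ∀ᵐ t : ℝ, t ≠ x := by simp [ae_iff]
    filter_upwards [this] with t ht
    rcases lt_or_gt_of_ne ht with h | h
    · rw [indicator_of_notMem (show t ∉ Ioi x from not_lt.2 h.le)]
      refine (hasDerivAt_const x (0:ℝ)).congr_of_eventuallyEq ?_
      filter_upwards [lt_mem_nhds h] with y hy
      rw [max_eq_right (by linarith), zero_mul]
    · rw [indicator_of_mem (show t ∈ Ioi x from h)]
      have : HasDerivAt (fun y => (t - y) * |V t|) (-|V t|) x := by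
        simpa using ((hasDerivAt_id x).const_sub t).mul_const |V t|
      refine this.congr_of_eventuallyEq ?_
      filter_upwards [gt_mem_nhds h] with y hy
      rw [max_eq_left (by linarith)]

lemma DTaux_cont (V : ℝ → ℝ) (hi : Integrable (fun t => |V t|)) : Continuous (etaV V) := by
  have : etaV V = fun u => etaV V 0 - ∫ t in (0:ℝ)..u, |V t| := by
    ext u
    have := intervalIntegral.integral_interval_add_Ioi (a := 0) (b := u)
      hi.integrableOn hi.integrableOn
    unfold etaV
    linarith
  rw [this]
  exact continuous_const.sub (intervalIntegral.continuous_primitive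
    (fun a b => hi.intervalIntegrable) 0)

lemma DTaux_eta_nonneg (V : ℝ → ℝ) (u : ℝ) : 0 ≤ etaV V u :=
  integral_nonneg fun _ => abs_nonneg _

lemma DTaux_gamma_nonneg (V : ℝ → ℝ) (u : ℝ) : 0 ≤ gammaOne V u := by
  rw [DTaux_gamma_eq]
  exact integral_nonneg fun _ => mul_nonneg (le_max_right _ _) (abs_nonneg _)

lemma DTaux_eta_anti (V : ℝ → ℝ) (hi : Integrable (fun t => |V t|)) {a b : ℝ} (h : a ≤ b) :
    etaV V b ≤ etaV V a :=
  setIntegral_mono_set hi.integrableOn (Filter.Eventually.of_forall fun _ => abs_nonneg _)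
    (Ioi_subset_Ioi h).eventuallyLE

lemma DTaux_gamma_anti (V : ℝ → ℝ) (hV : Measurable V)
    (hV1 : Integrable (fun t => (1 + |t|) * |V t|)) {a b : ℝ} (h : a ≤ b) :
    gammaOne V b ≤ gammaOne V a := by
  rw [DTaux_gamma_eq, DTaux_gamma_eq]
  refine integral_mono (DTaux_gint V hV hV1 b) (DTaux_gint V hV hV1 a) fun t => ?_
  exact mul_le_mul_of_nonneg_right (max_le_max (by linarith) le_rfl) (abs_nonneg _)

/-- Bound on the Deift–Trubowitz iterates: for `V` with `∫ (1+|t|)|V(t)| dt < ∞`,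
`|Kₙ(x,y)| ≤ η(x+y) γ₁(x)ⁿ / n!` for all `n ≥ 0` and `x, y ≥ 0`. -/
theorem DT_iterate_bound (V : ℝ → ℝ) (hV : Measurable V)
    (hV1 : Integrable (fun t => (1 + |t|) * |V t|)) :
    ∀ n : ℕ, ∀ x : ℝ, 0 ≤ x → ∀ y : ℝ, 0 ≤ y →
      |DTiter V n x y| ≤ etaV V (x + y) * gammaOne V x ^ n / n.factorial := by
  have hi := DTaux_int V hV hV1
  have hc := DTaux_cont V hi
  have hd := DTaux_deriv V hV hV1
  have hgc : Continuous (gammaOne V) :=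
    continuous_iff_continuousAt.2 fun x => (hd x).continuousAt
  intro n
  induction n with
  | zero =>
    intro x hx y hy
    simp only [DTiter, pow_zero, mul_one, Nat.factorial_zero, Nat.cast_one, div_one]
    exact abs_integral_le_integral_abs
  | succ n ih =>
    intro x hx y hy
    have hfac : (0:ℝ) < n.factorial := by exact_mod_cast n.factorial_pos
    have hinner : ∀ z ∈ Ioc (0:ℝ) y, ‖∫ t in Ioi (x + y - z), V t * DTiter V n t z‖ ≤
        etaV V (x + y) / n.factorial * (gammaOne V (x + y - z) ^ n * etaV V (x + y - z)) := by
      intro z hz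
      have e : etaV V (x + y) / n.factorial *
          (gammaOne V (x + y - z) ^ n * etaV V (x + y - z)) =
          ∫ t in Ioi (x + y - z),
            |V t| * (etaV V (x + y) * gammaOne V (x + y - z) ^ n / n.factorial) := by
        rw [integral_mul_const]
        change _ = etaV V (x + y - z) * _
        ring
      rw [e]
      refine norm_integral_le_of_norm_le (hi.mul_const _).integrableOn ?_
      refine (ae_restrict_iff' measurableSet_Ioi).2 (Filter.Eventually.of_forall fun t ht => ?_)
      have ht' : x + y - z < t := ht
      rw [norm_mul, Real.norm_eq_abs, Real.norm_eq_abs]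
      refine mul_le_mul_of_nonneg_left ?_ (abs_nonneg _)
      refine (ih t (by linarith [hz.2]) z hz.1.le).trans ?_
      refine div_le_div_of_nonneg_right ?_ hfac.le
      exact mul_le_mul (DTaux_eta_anti V hi (by linarith))
        (pow_le_pow_left₀ (DTaux_gamma_nonneg V t) (DTaux_gamma_anti V hV hV1 ht'.le) n)
        (pow_nonneg (DTaux_gamma_nonneg V t) n) (DTaux_eta_nonneg V _)
    have hcont : Continuous fun z =>
        gammaOne V (x + y - z) ^ n * etaV V (x + y - z) := by fun_prop
    have hftc : ∫ z in (0:ℝ)..y, gammaOne V (x + y - z) ^ n * etaV V (x + y - z) =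
        gammaOne V (x + y - y) ^ (n + 1) / (n + 1) - gammaOne V (x + y - 0) ^ (n + 1) / (n + 1) := by
      refine intervalIntegral.integral_eq_sub_of_hasDerivAt
        (f := fun z => gammaOne V (x + y - z) ^ (n + 1) / ((n : ℝ) + 1)) (fun z _ => ?_)
        (hcont.intervalIntegrable _ _)
      have h1 : HasDerivAt (fun z => gammaOne V (x + y - z)) (etaV V (x + y - z)) z := by
        have := (hd (x + y - z)).comp z ((hasDerivAt_id z).const_sub (x + y))
        rw [show -etaV V (x + y - z) * -1 = etaV V (x + y - z) by ring] at this
        exact this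
      have h2 := (h1.pow (n + 1)).div_const ((n : ℝ) + 1)
      have hn : (n : ℝ) + 1 ≠ 0 := by positivity
      have e : gammaOne V (x + y - z) ^ n * etaV V (x + y - z) =
          ((n + 1 : ℕ) : ℝ) * gammaOne V (x + y - z) ^ (n + 1 - 1) * etaV V (x + y - z) /
            ((n : ℝ) + 1) := by
        rw [Nat.add_sub_cancel]
        push_cast
        field_simp
      rw [e]
      exact h2
    have hle : |DTiter V (n + 1) x y| ≤ ∫ z in Ioc (0:ℝ) y, etaV V (x + y) / n.factorial *
        (gammaOne V (x + y - z) ^ n * etaV V (x + y - z)) := by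
      simp only [DTiter]
      rw [← Real.norm_eq_abs]
      refine norm_integral_le_of_norm_le ?_
        ((ae_restrict_iff' measurableSet_Ioc).2 (Filter.Eventually.of_forall hinner))
      exact (continuous_const.mul hcont).integrableOn_Ioc
    refine hle.trans ?_
    rw [integral_const_mul, ← intervalIntegral.integral_of_le hy, hftc, add_sub_cancel_right]
    have hp : 0 ≤ gammaOne V (x + y - 0) ^ (n + 1) / ((n:ℝ) + 1) :=
      div_nonneg (pow_nonneg (DTaux_gamma_nonneg V _) _) (by positivity)
    calc _ ≤ etaV V (x + y) / n.factorial * (gammaOne V x ^ (n + 1) / ((n:ℝ) + 1)) :=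
          mul_le_mul_of_nonneg_left (by linarith) (div_nonneg (DTaux_eta_nonneg V _) hfac.le)
      _ = _ := by
          rw [Nat.factorial_succ]
          push_cast
          rw [div_mul_div_comm, mul_comm ((n:ℝ) + 1)]
end

section
/- Let q ≠ 0 and L > 0 be real numbers with qL ≠ 1/2, and for real k ≠ 0 define t_{q,L}(k) = k^2 e^{-2ikL}/D_{q,L}(k) with D_{q,L}(k) = q^2 e^{2ikL} - (ik+q)^2 e^{-2ikL} (nonzero for k ≠ 0). Then lim_{k→0} t_{q,L}(k) = 0 and lim_{k→0} t_{q,L}(k)/k = -i/(2q(2qL - 1)); that is, the non-resonant double Dirac delta potential is generic, with T(k) = αk + o(k) as k → 0 where α = -i/(2q(2qL - 1)). -/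
open Complex Filter Topology

open Complex

/-- The denominator `D_{q,L}(k) = q² e^{2ikL} - (ik + q)² e^{-2ikL}` for the double Dirac
delta potential of strength `q` at `x = ±L`. -/
noncomputable def doubleDeltaD (q L k : ℝ) : ℂ :=
  (q : ℂ) ^ 2 * Complex.exp (2 * I * k * L) - (I * k + q) ^ 2 * Complex.exp (-(2 * I * k * L))

/-- Transmission coefficient `t_{q,L}(k) = k² e^{-2ikL} / D_{q,L}(k)`. -/
noncomputable def doubleDeltaT (q L k : ℝ) : ℂ :=
  (k : ℂ) ^ 2 * Complex.exp (-(2 * I * k * L)) / doubleDeltaD q L k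


/-- The non-resonant (`qL ≠ 1/2`) double Dirac delta potential is generic:
`t_{q,L}(k) → 0` and `t_{q,L}(k)/k → -i/(2q(2qL - 1))` as `k → 0`. -/
theorem double_delta_generic (q L : ℝ) (hq : q ≠ 0) (hL : 0 < L) (hres : q * L ≠ 1 / 2) :
    Tendsto (fun k : ℝ => doubleDeltaT q L k) (𝓝[≠] 0) (𝓝 0) ∧
    Tendsto (fun k : ℝ => doubleDeltaT q L k / k) (𝓝[≠] 0)
      (𝓝 (-I / (2 * q * (2 * q * L - 1)))) := by
  have hc : (2 * (I * q) * (2 * q * L - 1) : ℂ) ≠ 0 := by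
    have h1 : (2 * q * L - 1 : ℝ) ≠ 0 := fun h => hres (by linarith)
    have h2 : (2 * q * L - 1 : ℂ) ≠ 0 := by exact_mod_cast h1
    have h3 : (q : ℂ) ≠ 0 := by exact_mod_cast hq
    exact mul_ne_zero (mul_ne_zero two_ne_zero (mul_ne_zero I_ne_zero h3)) h2
  have hk : HasDerivAt (fun k : ℝ => (k : ℂ)) 1 0 := Complex.ofRealCLM.hasDerivAt
  have he : HasDerivAt (fun k : ℝ => 2 * I * (k : ℂ) * L) (2 * I * 1 * L) 0 :=
    (hk.const_mul (2 * I)).mul_const (L : ℂ)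
  have hD : HasDerivAt (fun k : ℝ => doubleDeltaD q L k) (2 * (I * q) * (2 * q * L - 1)) 0 := by
    have h := (he.cexp.const_mul ((q : ℂ) ^ 2)).sub
      ((((hk.const_mul I).add_const (q : ℂ)).pow 2).mul he.neg.cexp)
    refine HasDerivAt.congr_deriv h ?_
    simp
    ring
  have hD0 : doubleDeltaD q L 0 = 0 := by simp [doubleDeltaD]
  have hs := hD.tendsto_slope
  have hE : Tendsto (fun k : ℝ => Complex.exp (-(2 * I * k * L))) (𝓝[≠] 0) (𝓝 1) := by
    have h : Continuous (fun k : ℝ => Complex.exp (-(2 * I * k * L))) := by fun_prop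
    have h' := h.tendsto 0
    simp only [ofReal_zero, mul_zero, zero_mul, neg_zero, Complex.exp_zero] at h'
    exact h'.mono_left nhdsWithin_le_nhds
  have key : Tendsto (fun k : ℝ => doubleDeltaT q L k / k) (𝓝[≠] 0)
      (𝓝 (-I / (2 * q * (2 * q * L - 1)))) := by
    have h := hE.div hs hc
    have hv : (1 : ℂ) / (2 * (I * q) * (2 * q * L - 1)) = -I / (2 * q * (2 * q * L - 1)) := by
      have hc' : (2 * q * (2 * q * L - 1) : ℂ) ≠ 0 := by
        intro h0
        apply hc
        linear_combination I * h0
      rw [div_eq_div_iff hc hc']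
      linear_combination (2 * q * (2 * q * L - 1) : ℂ) * I_sq
    rw [hv] at h
    refine h.congr' ?_
    filter_upwards [self_mem_nhdsWithin] with k hk0
    have hk1 : (k : ℂ) ≠ 0 := by exact_mod_cast hk0
    simp only [Pi.div_apply, slope_def_module, hD0, sub_zero, doubleDeltaT, real_smul, ofReal_inv]
    rw [div_div, div_mul_eq_div_div, div_mul_eq_div_div]
    field_simp
  refine ⟨?_, key⟩
  have hk' : Tendsto (fun k : ℝ => (k : ℂ)) (𝓝[≠] 0) (𝓝 0) := by
    have h := hk.continuousAt.tendsto
    simp only [ofReal_zero] at h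
    exact h.mono_left nhdsWithin_le_nhds
  have h := key.mul hk'
  rw [mul_zero] at h
  refine h.congr' ?_
  filter_upwards [self_mem_nhdsWithin] with k hk0
  have hk1 : (k : ℂ) ≠ 0 := by exact_mod_cast hk0
  exact div_mul_cancel₀ _ hk1
end
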